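/- arXiv:1709.06056 — 5 statements merged into one kernel-verified Lean document; each statement's English description precedes it below -/
import Mathlib

section
/- There is no infinite sequence of Ctrie state descriptors s(0), s(1), s(2), … such that for every i the descriptor s(i) transitions to s(i+1) in one step; equivalently, the converse of the one-step transition relation on state descriptors is well-founded, so any sequence of non-consistency-changing successful CAS instructions in the Ctrie algorithm consists of finitely many state changes. -/
/-- A Ctrie state descriptor: (n, t, l, r, d) where `n` counts reachable
null-inodes, `t` reachable tomb-inodes, `l` live inodes, `r` single tips,
and `d` the total path length. -/
abbrev CtrieState := ℕ × ℕ × ℕ × ℕ × ℕ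

/-- One-step transition relation on Ctrie state descriptors, abstracting the
successful CAS instructions of the Ctrie algorithm that do not cause a
consistency change. -/
def CtrieStep : CtrieState → CtrieState → Prop :=
  fun (n, t, l, r, d) (n', t', l', r', d') =>
    l' = l ∧ (
      -- (i)
      (r > 0 ∧ d ≥ 1 ∧ ∃ j ≤ 1, n' = n + j ∧ t' = t ∧ r' = r - 1 ∧ d' = d - 1) ∨
      -- (ii)
      (∃ k ≤ n, ∃ j ≤ t, k + j > 0 ∧ n' = n - k ∧ t' = t - j ∧ r' = r ∧ d' ≤ d) ∨
      -- (iii)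
      (r > 0 ∧ ∃ j ≤ 1, d ≥ j ∧ n' = n + j ∧ t' = t ∧ r' = r - 1 ∧ d' = d - j) ∨
      -- (iv)
      (∃ k, 0 < k ∧ k ≤ n ∧ n' = n - k ∧ t' = t ∧ r' = r ∧ d' ≤ d) ∨
      -- (v)
      (n > 0 ∧ d ≥ 1 ∧ ∃ j : ℕ, n' = n - 1 ∧ t' = t ∧ r' = r + j ∧ d' = d - 1) ∨
      -- (vi)
      (t > 0 ∧ d ≥ 1 ∧ ∃ j : ℕ, n' = n ∧ t' = t - 1 ∧ r' = r + j ∧ d' = d - 1) ∨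
      -- (vii)
      ((n, t, l, r, d) = ((1 : ℕ), (0 : ℕ), (0 : ℕ), (0 : ℕ), (1 : ℕ)) ∧
        (n', t', l', r', d') = ((0 : ℕ), (0 : ℕ), (0 : ℕ), (0 : ℕ), (0 : ℕ))))

/-- Every transition strictly decreases `(d, n + t + r)` lexicographically. -/
theorem CtrieStep.lex_lt {s s' : CtrieState} (h : CtrieStep s s') :
    Prod.Lex (· < ·) (· < ·)
      (s'.2.2.2.2, s'.1 + s'.2.1 + s'.2.2.2.1) (s.2.2.2.2, s.1 + s.2.1 + s.2.2.2.1) := by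
  obtain ⟨n, t, l, r, d⟩ := s
  obtain ⟨n', t', l', r', d'⟩ := s'
  simp only [CtrieStep, Prod.mk.injEq] at h
  rw [Prod.lex_def]
  dsimp only
  rcases h with ⟨-, ⟨_, _, j, h⟩ | ⟨k, _, j, h⟩ | ⟨_, j, h⟩ | ⟨k, h⟩ | ⟨_, _, j, h⟩ |
    ⟨_, _, j, h⟩ | h⟩ <;> omega

theorem CtrieStep.wellFounded_flip :
    WellFounded (fun s' s : CtrieState => CtrieStep s s') :=
  Subrelation.wf CtrieStep.lex_lt
    (InvImage.wf (fun s : CtrieState => (s.2.2.2.2, s.1 + s.2.1 + s.2.2.2.1))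
      (WellFounded.prod_lex wellFounded_lt wellFounded_lt))

/-- There is no infinite sequence of one-step Ctrie state-descriptor
transitions; equivalently, the converse of the one-step transition relation
is well-founded, so any sequence of non-consistency-changing successful CAS
instructions consists of finitely many state changes. -/
theorem ctrieStep_no_infinite_sequence :
    (¬ ∃ s : ℕ → CtrieState, ∀ i : ℕ, CtrieStep (s i) (s (i + 1))) ∧
    WellFounded (fun s' s : CtrieState => CtrieStep s s') := by
  refine ⟨?_, CtrieStep.wellFounded_flip⟩
  rintro ⟨s, hs⟩
  exact (wellFounded_iff_isEmpty_descending_chain.mp CtrieStep.wellFounded_flip).false ⟨s, hs⟩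
end

section
/- For every bitmap bmp : ℕ and bit indices i < j with testBit bmp i = true and testBit bmp j = true, the Ctrie array positions satisfy pos(bmp, i) < pos(bmp, j), where pos(bmp, i) = popCount (bmp &&& (2^i − 1)); in particular, distinct set bits of the bitmap are assigned distinct array positions. -/
/-- The number of set bits (population count / bitcount) of a natural number. -/
def popCount (n : ℕ) : ℕ := n.bits.count true

/-- The Ctrie array position of the branch with flag `2^i` in a cnode with
bitmap `bmp`: the number of set bits of `bmp` strictly below position `i`. -/
def pos (bmp i : ℕ) : ℕ := popCount (bmp &&& (2 ^ i - 1))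

theorem popCount_eq_mod_two_add (n : ℕ) : popCount n = n % 2 + popCount (n / 2) := by
  induction n using Nat.binaryRec' with
  | zero => simp [popCount]
  | bit b n h _ =>
    rw [Nat.bit_div_two, popCount, popCount, Nat.bits_append_bit n b h]
    cases b <;> simp [add_comm]

theorem pos_zero (bmp : ℕ) : pos bmp 0 = 0 := by
  simp [pos, popCount]

theorem pos_succ_eq_mod_two_add (bmp i : ℕ) :
    pos bmp (i + 1) = bmp % 2 + pos (bmp / 2) i := by
  simp only [pos, Nat.and_two_pow_sub_one_eq_mod]
  rw [popCount_eq_mod_two_add, pow_succ', Nat.mod_mul_right_mod, Nat.mod_mul_right_div_self]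

theorem pos_succ (bmp i : ℕ) : pos bmp (i + 1) = pos bmp i + (bmp.testBit i).toNat := by
  induction i generalizing bmp with
  | zero => rw [pos_succ_eq_mod_two_add, pos_zero, pos_zero, Nat.toNat_testBit]; simp
  | succ i ih =>
    rw [pos_succ_eq_mod_two_add, ih, pos_succ_eq_mod_two_add bmp i, Nat.testBit_succ, add_assoc]

theorem pos_mono (bmp : ℕ) : Monotone (pos bmp) :=
  monotone_nat_of_le_succ fun i => by simp [pos_succ]

/-- Distinct set bits of the bitmap are assigned distinct (indeed, strictly
increasing) array positions. -/
theorem pos_strictMono_on_set_bits (bmp i j : ℕ) (hij : i < j)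
    (hi : bmp.testBit i = true) (hj : bmp.testBit j = true) :
    pos bmp i < pos bmp j := by
  calc
    pos bmp i < pos bmp (i + 1) := by simp [pos_succ, hi]
    _ ≤ pos bmp j := pos_mono bmp hij
end

section
/- For every bitmap bmp : ℕ, the map i ↦ pos(bmp, i) = popCount (bmp &&& (2^i − 1)) is a bijection from the set {i : ℕ | testBit bmp i = true} of set bits of bmp onto the set {m : ℕ | m < popCount bmp} of valid array positions; that is, each slot of a cnode array whose length equals popCount bmp corresponds to exactly one set bit of the bitmap. -/
theorem popCount_eq_card (n : ℕ) : popCount n = n.bitIndices.toFinset.card := by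
  rw [List.toFinset_card_of_nodup Nat.bitIndices_nodup, popCount]
  induction n using Nat.binaryRec' with
  | zero => simp
  | bit b n hn ih =>
    rw [Nat.bits_append_bit n b hn]
    cases b <;> simp [ih]

theorem pos_eq_card (bmp i : ℕ) :
    pos bmp i = (bmp.bitIndices.toFinset.filter (· < i)).card := by
  rw [pos, popCount_eq_card]
  congr 1
  ext j
  simp [and_comm]

theorem pos_lt_pos {bmp i j : ℕ} (hi : bmp.testBit i = true) (hij : i < j) :
    pos bmp i < pos bmp j := by
  rw [pos_eq_card, pos_eq_card]
  apply Finset.card_lt_card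
  rw [Finset.ssubset_iff_of_subset
    (Finset.monotone_filter_right _ fun _ _ h => lt_trans h hij)]
  exact ⟨i, by simp [hi, hij], by simp⟩

theorem pos_lt_popCount {bmp i : ℕ} (hi : bmp.testBit i = true) :
    pos bmp i < popCount bmp := by
  rw [pos_eq_card, popCount_eq_card]
  exact Finset.card_lt_card (Finset.filter_ssubset.2 ⟨i, by simp [hi], by simp⟩)

theorem pos_injOn (bmp : ℕ) : Set.InjOn (pos bmp) {i | bmp.testBit i = true} :=
  StrictMonoOn.injOn fun _ hi _ _ hij => pos_lt_pos hi hij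

/-- The map `i ↦ pos(bmp, i)` is a bijection from the set of set bits of
`bmp` onto the set of valid array positions `{m | m < popCount bmp}`: each
slot of a cnode array whose length equals `popCount bmp` corresponds to
exactly one set bit of the bitmap. -/
theorem pos_bijOn_set_bits (bmp : ℕ) :
    Set.BijOn (fun i => pos bmp i)
      {i : ℕ | bmp.testBit i = true}
      {m : ℕ | m < popCount bmp} := by
  refine ⟨fun i hi => pos_lt_popCount hi, pos_injOn bmp, ?_⟩
  have hsurj : Set.SurjOn (pos bmp) (bmp.bitIndices.toFinset : Set ℕ)
      (Finset.range (popCount bmp) : Set ℕ) :=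
    Finset.surjOn_of_injOn_of_card_le _
      (fun i hi => by
        simpa using pos_lt_popCount (show bmp.testBit i = true by simpa using hi))
      ((pos_injOn bmp).mono fun i hi => by simpa using hi)
      (by rw [Finset.card_range, popCount_eq_card])
  simpa [Set.SurjOn, Set.subset_def] using hsurj
end

section
/- Let bmp : ℕ be a bitmap and i : ℕ a bit index with testBit bmp i = false, and let bmp' = bmp ||| 2^i be the bitmap with the flag 2^i added. Then: (1) popCount bmp' = popCount bmp + 1; (2) pos(bmp', i) = pos(bmp, i); and (3) for every j with testBit bmp j = true, pos(bmp', j) = pos(bmp, j) if j < i and pos(bmp', j) = pos(bmp, j) + 1 if j > i. Hence inserting the new branch at position pos(bmp, i) and shifting later entries by one yields an array consistent with the updated bitmap, preserving invariants INV2 and INV3. -/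
theorem popCount_bit (b : Bool) (n : ℕ) : popCount (Nat.bit b n) = popCount n + b.toNat := by
  by_cases hn : n = 0 → b = true
  · rw [popCount, Nat.bits_append_bit n b hn]
    cases b <;> simp [popCount]
  · push Not at hn
    obtain ⟨rfl, hb⟩ := hn
    simp [Bool.eq_false_iff.mpr hb, popCount]

theorem popCount_or_two_pow {n i : ℕ} (h : n.testBit i = false) :
    popCount (n ||| 2 ^ i) = popCount n + 1 := by
  induction i generalizing n with
  | zero =>
    induction n using Nat.bitCasesOn with
    | bit b n =>
      obtain rfl : b = false := by simpa using h
      have : Nat.bit false n ||| 2 ^ 0 = Nat.bit true n := by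
        simpa using Nat.lor_bit false n true 0
      rw [this, popCount_bit, popCount_bit]
      simp
  | succ i ih =>
    induction n using Nat.bitCasesOn with
    | bit b n =>
      have : Nat.bit b n ||| 2 ^ (i + 1) = Nat.bit b (n ||| 2 ^ i) := by
        simpa [Nat.bit_false, pow_succ'] using Nat.lor_bit b n false (2 ^ i)
      rw [Nat.testBit_bit_succ] at h
      rw [this, popCount_bit, popCount_bit, ih h]
      omega

theorem pos_or_two_pow_of_le (n : ℕ) {i j : ℕ} (hj : j ≤ i) :
    pos (n ||| 2 ^ i) j = pos n j := by
  unfold pos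
  congr 1
  refine Nat.eq_of_testBit_eq fun k => ?_
  simp only [Nat.testBit_and, Nat.testBit_or, Nat.testBit_two_pow, Nat.testBit_two_pow_sub_one]
  grind

theorem pos_or_two_pow_of_lt {n i j : ℕ} (h : n.testBit i = false) (hj : i < j) :
    pos (n ||| 2 ^ i) j = pos n j + 1 := by
  have : (n ||| 2 ^ i) &&& (2 ^ j - 1) = (n &&& (2 ^ j - 1)) ||| 2 ^ i := by
    refine Nat.eq_of_testBit_eq fun k => ?_
    simp only [Nat.testBit_and, Nat.testBit_or, Nat.testBit_two_pow, Nat.testBit_two_pow_sub_one]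
    grind
  unfold pos
  rw [this, popCount_or_two_pow (by simp [h])]

/-- Adding the flag `2^i` to a bitmap whose `i`-th bit is unset: the bitcount
grows by one, the position of the new flag is unchanged, and positions of the
other set bits are unchanged below `i` and shifted up by one above `i`.
Hence inserting the new branch at position `pos(bmp, i)` and shifting later
entries by one yields an array consistent with the updated bitmap, preserving
invariants INV2 and INV3. -/
theorem pos_insert_flag (bmp i : ℕ) (h : bmp.testBit i = false) :
    popCount (bmp ||| 2 ^ i) = popCount bmp + 1 ∧
    pos (bmp ||| 2 ^ i) i = pos bmp i ∧
    (∀ j, bmp.testBit j = true →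
      (j < i → pos (bmp ||| 2 ^ i) j = pos bmp j) ∧
      (j > i → pos (bmp ||| 2 ^ i) j = pos bmp j + 1)) := by
  exact ⟨popCount_or_two_pow h, pos_or_two_pow_of_le bmp le_rfl, fun j _ =>
    ⟨fun hj => pos_or_two_pow_of_le bmp hj.le, pos_or_two_pow_of_lt h⟩⟩
end

section
/- Let W ≥ 1 be the branching width, let h₁, h₂ : ℕ be two distinct hashcodes, and let l : ℕ be such that the hashcode chunks agree at every level index below l, i.e., (h₁ >>> (W·l')) % 2^W = (h₂ >>> (W·l')) % 2^W for all l' < l. Then 2^(W·l) ≤ h₁ ^^^ h₂ (bitwise XOR). In particular, the depth at which two distinct hashcodes first separate in the hash trie is at most log_{2^W} of their XOR, quantifying the O(log_{2^W} n) bound on the length of a search path. -/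
/-- The hashcode chunk of a hashcode `h` at level index `l`, for branching
width `W`: the block of `W` bits of `h` starting at bit position `W·l`. -/
def chunk (W l h : ℕ) : ℕ := (h >>> (W * l)) % 2 ^ W

/-- Bit `i` of `h` is bit `i % W` of the chunk of `h` at level index `i / W`. -/
theorem testBit_chunk_div_mod {W : ℕ} (hW : 1 ≤ W) (h i : ℕ) :
    (chunk W (i / W) h).testBit (i % W) = h.testBit i := by
  simp [chunk, Nat.testBit_mod_two_pow, Nat.testBit_shiftRight, Nat.mod_lt i hW, Nat.div_add_mod]

/-- If two distinct hashcodes have equal chunks at every level index below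
`l`, then `2^(W·l) ≤ h₁ ^^^ h₂`. In particular, the depth at which two
distinct hashcodes first separate in the hash trie is at most the base-`2^W`
logarithm of their XOR, quantifying the `O(log_{2^W} n)` bound on the length
of a search path. -/
theorem xor_ge_of_chunks_agree_below (W : ℕ) (hW : 1 ≤ W) (h₁ h₂ : ℕ)
    (hne : h₁ ≠ h₂) (l : ℕ)
    (hagree : ∀ l' < l, chunk W l' h₁ = chunk W l' h₂) :
    2 ^ (W * l) ≤ h₁ ^^^ h₂ := by
  obtain ⟨i, hi⟩ := Nat.exists_testBit_ne_of_ne hne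
  have hle : W * l ≤ i := by
    by_contra! hlt
    apply hi
    rw [← testBit_chunk_div_mod hW h₁ i, ← testBit_chunk_div_mod hW h₂ i,
      hagree _ (Nat.div_lt_of_lt_mul hlt)]
  calc 2 ^ (W * l) ≤ 2 ^ i := Nat.pow_le_pow_right two_pos hle
    _ ≤ h₁ ^^^ h₂ := Nat.ge_two_pow_of_testBit (by simpa [Nat.testBit_xor] using hi)
end
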